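/- arXiv:2310.01173 — 7 statements merged into one kernel-verified Lean document; each statement's English description precedes it below -/
import Mathlib

section
/- Let n be a natural number, p ∈ (0,1], and c ≥ 1/2 a real number. If B(n,p) is a binomial random variable with parameters n and p, then E[1/(c + B(n,p))] ≤ 2/(p(n+1)); equivalently, Σ_{k=0}^n (1/(c+k))·C(n,k)·p^k·(1−p)^{n−k} ≤ 2/(p(n+1)). -/
/-! Since `C(n,k)/(k+1) = C(n+1,k+1)/(n+1)`, the terms of `x(n+1) ∑ C(n,k) x^k y^(n-k)/(k+1)` are
those of the binomial expansion of `(x+y)^(n+1)` other than `y^(n+1)`, which evaluates the shift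
`c = 1` exactly. A general shift `c > 0` costs at most a factor `max 1 (1/c)`, uniformly in `k`. -/

open Finset

section Semifield

variable {K : Type*} [Semifield K]

theorem mul_sum_choose_div_add_one_add_pow [CharZero K] (n : ℕ) (x y : K) :
    x * (n + 1) * ∑ k ∈ range (n + 1), 1 / ((k : K) + 1) * n.choose k * x ^ k * y ^ (n - k)
      + y ^ (n + 1) = (x + y) ^ (n + 1) := by
  have absorption (k : ℕ) :
      (n + 1 : K) * (1 / ((k : K) + 1) * n.choose k) = (n + 1).choose (k + 1) := by
    have hk : (k : K) + 1 ≠ 0 := k.cast_add_one_ne_zero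
    field_simp
    rw [mul_comm (k + 1 : K)]
    exact_mod_cast Nat.add_one_mul_choose_eq n k
  rw [mul_sum, add_pow x y (n + 1), sum_range_succ' _ (n + 1)]
  congr 1
  · refine sum_congr rfl fun k _ ↦ ?_
    rw [← absorption, Nat.add_sub_add_right]
    ring
  · simp

variable [LinearOrder K] [IsStrictOrderedRing K]

theorem one_div_add_le_max_mul_one_div_add_one {c x : K} (hc : 0 < c) (hx : 0 ≤ x) :
    1 / (c + x) ≤ max 1 (1 / c) * (1 / (x + 1)) := by
  rw [mul_one_div, div_le_div_iff₀ (by positivity) (by positivity)]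
  calc
    1 * (x + 1) = 1 / c * c + 1 * x := by rw [one_div_mul_cancel hc.ne']; ring
    _ ≤ max 1 (1 / c) * c + max 1 (1 / c) * x := by
      gcongr
      · exact le_max_right _ _
      · exact le_max_left _ _
    _ = max 1 (1 / c) * (c + x) := (mul_add ..).symm

theorem binomial_inv_shift_expectation_le_general (n : ℕ) {x y c : K}
    (hx : 0 < x) (hy : 0 ≤ y) (hc : 0 < c) :
    ∑ k ∈ range (n + 1), 1 / (c + (k : K)) * n.choose k * x ^ k * y ^ (n - k)
      ≤ max 1 (1 / c) * (x + y) ^ (n + 1) / (x * (n + 1)) := by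
  rw [le_div_iff₀' (by positivity)]
  calc
    x * (n + 1) * ∑ k ∈ range (n + 1), 1 / (c + (k : K)) * n.choose k * x ^ k * y ^ (n - k)
      ≤ x * (n + 1) * ∑ k ∈ range (n + 1),
          max 1 (1 / c) * (1 / ((k : K) + 1)) * n.choose k * x ^ k * y ^ (n - k) := by
      gcongr with k
      exact one_div_add_le_max_mul_one_div_add_one hc k.cast_nonneg
    _ = max 1 (1 / c) * (x * (n + 1) *
          ∑ k ∈ range (n + 1), 1 / ((k : K) + 1) * n.choose k * x ^ k * y ^ (n - k)) := by
      simp only [mul_sum]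
      exact sum_congr rfl fun k _ ↦ by ring
    _ ≤ max 1 (1 / c) * (x + y) ^ (n + 1) := by
      rw [← mul_sum_choose_div_add_one_add_pow]
      gcongr
      exact le_add_of_nonneg_right (by positivity)

end Semifield

/-- For `n : ℕ`, `p ∈ (0,1]` and `c ≥ 1/2`, the expectation of
`1/(c + B(n,p))` for a binomial random variable `B(n,p)` is at most `2/(p(n+1))`:
`∑_{k=0}^n (1/(c+k))·C(n,k)·p^k·(1−p)^{n−k} ≤ 2/(p(n+1))`. -/
theorem binomial_inv_shift_expectation_le
    (n : ℕ) (p : ℝ) (hp0 : 0 < p) (hp1 : p ≤ 1) (c : ℝ) (hc : 1 / 2 ≤ c) :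
    ∑ k ∈ Finset.range (n + 1),
        (1 / (c + (k : ℝ))) * (n.choose k : ℝ) * p ^ k * (1 - p) ^ (n - k)
      ≤ 2 / (p * ((n : ℝ) + 1)) := by
  have hc0 : 0 < c := one_half_pos.trans_le hc
  have hmax : max 1 (1 / c) ≤ 2 := max_le one_le_two ((one_div_le hc0 two_pos).2 hc)
  refine (binomial_inv_shift_expectation_le_general n hp0 (sub_nonneg.2 hp1) hc0).trans ?_
  rw [add_sub_cancel, one_pow, mul_one]
  gcongr
end

section
/- Let n be a natural number and p ∈ (0,1]. If B(n,p) is a binomial random variable with parameters n and p, then E[(1/B(n,p))·1_{B(n,p)>0}] ≤ 2/(p(n+1)); equivalently, Σ_{k=1}^n (1/k)·C(n,k)·p^k·(1−p)^{n−k} ≤ 2/(p(n+1)). -/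
/-! Since `1 / k ≤ 2 / (k + 1)` for `k ≥ 1`, the expectation is at most twice that of
`1 / (B(n,p) + 1)`. The latter is explicit: the absorption identity
`C(n,k) / (k + 1) = C(n+1,k+1) / (n + 1)` turns it into a binomial sum of exponent `n + 1` that
lacks only its term of index `0`, so it equals `(1 - (1 - p) ^ (n + 1)) / (p * (n + 1))`. -/

section Semifield

variable {K : Type*} [Semifield K]

theorem cast_choose_div_add_one [CharZero K] (n k : ℕ) :
    (n.choose k : K) / (k + 1) = ((n + 1).choose (k + 1) : K) / (n + 1) := by
  rw [div_eq_div_iff k.cast_add_one_ne_zero n.cast_add_one_ne_zero, mul_comm]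
  exact_mod_cast Nat.add_one_mul_choose_eq n k

theorem sum_range_choose_div_add_one_mul_pow [CharZero K] (x y : K) (n : ℕ) :
    ∑ k ∈ Finset.range (n + 1), (n.choose k : K) / (k + 1) * x ^ (k + 1) * y ^ (n - k)
      + y ^ (n + 1) / (n + 1) = (x + y) ^ (n + 1) / (n + 1) := by
  rw [add_pow, Finset.sum_range_succ' _ (n + 1), add_div, Finset.sum_div]
  congr 1
  · refine Finset.sum_congr rfl fun k _ => ?_
    rw [cast_choose_div_add_one, Nat.add_sub_add_right]
    ring
  · simp

variable [LinearOrder K] [IsStrictOrderedRing K]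

theorem one_div_le_two_div_add_one {a : K} (ha : 1 ≤ a) : 1 / a ≤ 2 / (a + 1) := by
  have ha0 : 0 < a := zero_lt_one.trans_le ha
  rw [div_le_div_iff₀ ha0 (by positivity), one_mul, two_mul]
  gcongr

theorem sum_range_choose_div_add_one_mul_pow_le {x y : K} (hx : 0 < x) (hy : 0 ≤ y) (n : ℕ) :
    ∑ k ∈ Finset.range (n + 1), (n.choose k : K) / (k + 1) * x ^ k * y ^ (n - k)
      ≤ (x + y) ^ (n + 1) / (x * (n + 1)) := by
  rw [mul_comm x, ← div_div, le_div_iff₀ hx, Finset.sum_mul,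
    ← sum_range_choose_div_add_one_mul_pow x y n]
  refine le_add_of_le_of_nonneg (Finset.sum_congr rfl fun k _ => ?_).le (by positivity)
  ring

theorem binomial_inv_pos_expectation_le_general {x y : K} (hx : 0 < x) (hy : 0 ≤ y) (n : ℕ) :
    ∑ k ∈ Finset.Icc 1 n, (1 / (k : K)) * (n.choose k : K) * x ^ k * y ^ (n - k)
      ≤ 2 * (x + y) ^ (n + 1) / (x * ((n : K) + 1)) := by
  have hsub : Finset.Icc 1 n ⊆ Finset.range (n + 1) := fun k hk =>
    Finset.mem_range_succ_iff.2 (Finset.mem_Icc.1 hk).2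
  calc
    _ ≤ ∑ k ∈ Finset.Icc 1 n, 2 / ((k : K) + 1) * (n.choose k : K) * x ^ k * y ^ (n - k) := by
      gcongr ∑ k ∈ _, ?_ * _ * _ * _ with k hk
      exact one_div_le_two_div_add_one (Nat.one_le_cast.2 (Finset.mem_Icc.1 hk).1)
    _ ≤ ∑ k ∈ Finset.range (n + 1), 2 / ((k : K) + 1) * (n.choose k : K) * x ^ k * y ^ (n - k) :=
      Finset.sum_le_sum_of_subset_of_nonneg hsub fun k _ _ => by positivity
    _ = 2 * ∑ k ∈ Finset.range (n + 1), (n.choose k : K) / (k + 1) * x ^ k * y ^ (n - k) := by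
      rw [Finset.mul_sum]
      exact Finset.sum_congr rfl fun k _ => by ring
    _ ≤ 2 * ((x + y) ^ (n + 1) / (x * (n + 1))) := by
      gcongr
      exact sum_range_choose_div_add_one_mul_pow_le hx hy n
    _ = 2 * (x + y) ^ (n + 1) / (x * (n + 1)) := (mul_div_assoc ..).symm

end Semifield

/-- For `n : ℕ` and `p ∈ (0,1]`, the expectation of
`(1/B(n,p))·1_{B(n,p)>0}` for a binomial random variable `B(n,p)` is at most
`2/(p(n+1))`: `∑_{k=1}^n (1/k)·C(n,k)·p^k·(1−p)^{n−k} ≤ 2/(p(n+1))`. -/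
theorem binomial_inv_pos_expectation_le
    (n : ℕ) (p : ℝ) (hp0 : 0 < p) (hp1 : p ≤ 1) :
    ∑ k ∈ Finset.Icc 1 n,
        (1 / (k : ℝ)) * (n.choose k : ℝ) * p ^ k * (1 - p) ^ (n - k)
      ≤ 2 / (p * ((n : ℝ) + 1)) := by
  simpa only [add_sub_cancel, one_pow, mul_one] using
    binomial_inv_pos_expectation_le_general hp0 (sub_nonneg.2 hp1) n
end

section
/- Assume in addition that E[r_m(X)²] < ∞ for each m = 1,…,M. Then for every measurable function F : ℝ^M → ℝ with E[F(r(X))²] < ∞, one has E[|F(r(X)) − g*(X)|²] ≤ min_{1 ≤ m ≤ M} E[|r_m(X) − g*(X)|²] + E[|F(r(X)) − G(r(X))|²]. -/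
open MeasureTheory

/-!
In `L²`, conditional expectation is an orthogonal projection. As `G(r(X)) = E[g*(X) | r(X)]` by the
tower property, Pythagoras splits the risk of every square-integrable predictor `f(r(X))` as
`E|f(r(X)) - g*(X)|² = E|f(r(X)) - G(r(X))|² + E|G(r(X)) - g*(X)|²`. The second term does not depend
on `f`, and it is at most the risk of each single machine `r_m(X)`, since `r_m` is itself a function
of `r`.
-/

section Pythagoras

variable {Ω H : Type*} [MeasurableSpace Ω] {μ : Measure Ω}
  [NormedAddCommGroup H] [InnerProductSpace ℝ H]

theorem integrable_inner_of_memLp_two {u v : Ω → H} (hu : MemLp u 2 μ) (hv : MemLp v 2 μ) :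
    Integrable (fun ω => inner ℝ (u ω) (v ω)) μ :=
  memLp_one_iff_integrable.1 ((innerSL ℝ).memLp_of_bilin 1 hu hv)

theorem integral_norm_add_sq_of_integral_inner_eq_zero {u v : Ω → H} (hu : MemLp u 2 μ)
    (hv : MemLp v 2 μ) (huv : ∫ ω, inner ℝ (u ω) (v ω) ∂μ = 0) :
    ∫ ω, ‖u ω + v ω‖ ^ 2 ∂μ = ∫ ω, ‖u ω‖ ^ 2 ∂μ + ∫ ω, ‖v ω‖ ^ 2 ∂μ := by
  have hu_sq := hu.integrable_norm_pow two_ne_zero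
  have hv_sq := hv.integrable_norm_pow two_ne_zero
  have h_cross := (integrable_inner_of_memLp_two hu hv).const_mul 2
  have h_sum : Integrable (fun ω => ‖u ω‖ ^ 2 + 2 * inner ℝ (u ω) (v ω)) μ := hu_sq.add h_cross
  calc ∫ ω, ‖u ω + v ω‖ ^ 2 ∂μ
      = ∫ ω, ‖u ω‖ ^ 2 + 2 * inner ℝ (u ω) (v ω) + ‖v ω‖ ^ 2 ∂μ := by
        simp only [norm_add_sq_real]
    _ = ∫ ω, ‖u ω‖ ^ 2 ∂μ + 2 * ∫ ω, inner ℝ (u ω) (v ω) ∂μ + ∫ ω, ‖v ω‖ ^ 2 ∂μ := by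
        rw [integral_add h_sum hv_sq, integral_add hu_sq h_cross, integral_const_mul]
    _ = ∫ ω, ‖u ω‖ ^ 2 ∂μ + ∫ ω, ‖v ω‖ ^ 2 ∂μ := by rw [huv, mul_zero, add_zero]

end Pythagoras

section CondExp

variable {Ω : Type*} {m m₀ : MeasurableSpace Ω} {μ : Measure Ω}

theorem integral_bilin_condExp_of_aestronglyMeasurable_left {E F K : Type*}
    [NormedAddCommGroup E] [NormedSpace ℝ E] [CompleteSpace E]
    [NormedAddCommGroup F] [NormedSpace ℝ F] [NormedAddCommGroup K] [NormedSpace ℝ K]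
    [CompleteSpace K] (B : F →L[ℝ] E →L[ℝ] K) (hm : m ≤ m₀) [SigmaFinite (μ.trim hm)]
    {f : Ω → F} {g : Ω → E} (hf : AEStronglyMeasurable[m] f μ)
    (hfg : Integrable (fun ω => B (f ω) (g ω)) μ) (hg : Integrable g μ) :
    ∫ ω, B (f ω) (μ[g | m] ω) ∂μ = ∫ ω, B (f ω) (g ω) ∂μ := by
  rw [← integral_condExp hm (f := fun ω => B (f ω) (g ω))]
  exact integral_congr_ae (condExp_bilin_of_aestronglyMeasurable_left B hf hfg hg).symm

variable {H : Type*} [NormedAddCommGroup H] [InnerProductSpace ℝ H] [CompleteSpace H]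
  [IsFiniteMeasure μ] {f f' g e : Ω → H}

theorem integral_inner_condExp_sub_eq_zero (hm : m ≤ m₀) (hf : AEStronglyMeasurable[m] f μ)
    (hf2 : MemLp f 2 μ) (hg2 : MemLp g 2 μ) :
    ∫ ω, inner ℝ (f ω) (μ[g | m] ω - g ω) ∂μ = 0 := by
  have hfg := integrable_inner_of_memLp_two hf2 hg2
  have hfg' := integrable_inner_of_memLp_two hf2 (hg2.condExp (m := m) one_le_two)
  simp only [inner_sub_right]
  rw [integral_sub hfg' hfg, sub_eq_zero]
  exact integral_bilin_condExp_of_aestronglyMeasurable_left (innerSL ℝ) hm hf hfg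
    (hg2.integrable one_le_two)

theorem integral_norm_sub_sq_eq_add_condExp (hm : m ≤ m₀) (hf : AEStronglyMeasurable[m] f μ)
    (hf2 : MemLp f 2 μ) (hg2 : MemLp g 2 μ) :
    ∫ ω, ‖f ω - g ω‖ ^ 2 ∂μ =
      ∫ ω, ‖f ω - μ[g | m] ω‖ ^ 2 ∂μ + ∫ ω, ‖μ[g | m] ω - g ω‖ ^ 2 ∂μ := by
  have hE2 : MemLp μ[g | m] 2 μ := hg2.condExp one_le_two
  have h_orth : ∫ ω, inner ℝ (f ω - μ[g | m] ω) (μ[g | m] ω - g ω) ∂μ = 0 :=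
    integral_inner_condExp_sub_eq_zero hm
      (hf.sub stronglyMeasurable_condExp.aestronglyMeasurable) (hf2.sub hE2) hg2
  simpa only [Pi.sub_apply, sub_add_sub_cancel] using
    integral_norm_add_sq_of_integral_inner_eq_zero (hf2.sub hE2) (hE2.sub hg2) h_orth

theorem integral_norm_condExp_sub_sq_le (hm : m ≤ m₀) (hf : AEStronglyMeasurable[m] f μ)
    (hf2 : MemLp f 2 μ) (hg2 : MemLp g 2 μ) :
    ∫ ω, ‖μ[g | m] ω - g ω‖ ^ 2 ∂μ ≤ ∫ ω, ‖f ω - g ω‖ ^ 2 ∂μ := by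
  rw [integral_norm_sub_sq_eq_add_condExp hm hf hf2 hg2]
  exact le_add_of_nonneg_left (integral_nonneg fun ω => sq_nonneg _)

theorem integral_norm_sub_sq_le_add_of_ae_eq_condExp (hm : m ≤ m₀)
    (hf : AEStronglyMeasurable[m] f μ) (hf2 : MemLp f 2 μ)
    (hf' : AEStronglyMeasurable[m] f' μ) (hf'2 : MemLp f' 2 μ)
    (hg2 : MemLp g 2 μ) (he : e =ᵐ[μ] μ[g | m]) :
    ∫ ω, ‖f ω - g ω‖ ^ 2 ∂μ ≤ ∫ ω, ‖f' ω - g ω‖ ^ 2 ∂μ + ∫ ω, ‖f ω - e ω‖ ^ 2 ∂μ := by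
  have h_dist : ∫ ω, ‖f ω - e ω‖ ^ 2 ∂μ = ∫ ω, ‖f ω - μ[g | m] ω‖ ^ 2 ∂μ :=
    integral_congr_ae (he.mono fun ω hω => by simp only [hω])
  rw [integral_norm_sub_sq_eq_add_condExp hm hf hf2 hg2, h_dist, add_comm]
  exact add_le_add (integral_norm_condExp_sub_sq_le hm hf' hf'2 hg2) le_rfl

end CondExp

section Comap

variable {Ω 𝓧 𝓩 : Type*} [MeasurableSpace Ω] {μ : Measure Ω} [MeasurableSpace 𝓧]
  [MeasurableSpace 𝓩]

theorem aestronglyMeasurable_comap_comp {E : Type*} [TopologicalSpace E]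
    [TopologicalSpace.PseudoMetrizableSpace E] [SecondCountableTopology E] [MeasurableSpace E]
    [OpensMeasurableSpace E] (Z : Ω → 𝓩) {f : 𝓩 → E} (hf : Measurable f) :
    AEStronglyMeasurable[MeasurableSpace.comap Z inferInstance] (fun ω => f (Z ω)) μ :=
  (hf.comp (comap_measurable Z)).stronglyMeasurable.aestronglyMeasurable

theorem condExp_comap_comp_ae_eq {E : Type*} [NormedAddCommGroup E] [NormedSpace ℝ E]
    [CompleteSpace E] {X : Ω → 𝓧} (hX : Measurable X) [SigmaFinite (μ.trim hX.comap_le)]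
    {r : 𝓧 → 𝓩} (hr : Measurable r) {Y g : Ω → E}
    (hg : g =ᵐ[μ] μ[Y | MeasurableSpace.comap X inferInstance]) :
    μ[g | MeasurableSpace.comap (fun ω => r (X ω)) inferInstance] =ᵐ[μ]
      μ[Y | MeasurableSpace.comap (fun ω => r (X ω)) inferInstance] :=
  (condExp_congr_ae hg).trans
    (condExp_condExp_of_le (hr.comp (comap_measurable X)).comap_le hX.comap_le)

end Comap

theorem risk_le_min_estimator_add_variance_general {Ω 𝓧 ι H : Type*} [MeasurableSpace Ω]
    {μ : Measure Ω} [IsFiniteMeasure μ] [MeasurableSpace 𝓧] [Nonempty ι]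
    [NormedAddCommGroup H] [InnerProductSpace ℝ H] [CompleteSpace H]
    [MeasurableSpace H] [OpensMeasurableSpace H] [SecondCountableTopology H]
    {X : Ω → 𝓧} (hX : Measurable X) {Y : Ω → H} (hY2 : MemLp Y 2 μ)
    {r : 𝓧 → ι → H} (hr : Measurable r) (hr2 : ∀ i, MemLp (fun ω => r (X ω) i) 2 μ)
    {g : 𝓧 → H}
    (hg : (fun ω => g (X ω)) =ᵐ[μ] μ[Y | MeasurableSpace.comap X inferInstance])
    {G : (ι → H) → H}
    (hG : (fun ω => G (r (X ω))) =ᵐ[μ]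
      μ[Y | MeasurableSpace.comap (fun ω => r (X ω)) inferInstance])
    {F : (ι → H) → H} (hF : Measurable F) (hF2 : MemLp (fun ω => F (r (X ω))) 2 μ) :
    ∫ ω, ‖F (r (X ω)) - g (X ω)‖ ^ 2 ∂μ ≤
      (⨅ i, ∫ ω, ‖r (X ω) i - g (X ω)‖ ^ 2 ∂μ) + ∫ ω, ‖F (r (X ω)) - G (r (X ω))‖ ^ 2 ∂μ := by
  have hg2 : MemLp (fun ω => g (X ω)) 2 μ := (memLp_congr_ae hg).2 (hY2.condExp one_le_two)
  have hG_condExp : (fun ω => G (r (X ω))) =ᵐ[μ]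
      μ[fun ω => g (X ω) | MeasurableSpace.comap (fun ω => r (X ω)) inferInstance] :=
    hG.trans (condExp_comap_comp_ae_eq hX hr hg).symm
  rw [← sub_le_iff_le_add]
  refine le_ciInf fun i => sub_le_iff_le_add.2 ?_
  exact integral_norm_sub_sq_le_add_of_ae_eq_condExp (hr.comp hX).comap_le
    (aestronglyMeasurable_comap_comp _ hF) hF2
    (aestronglyMeasurable_comap_comp (fun ω => r (X ω)) (measurable_pi_apply i)) (hr2 i)
    hg2 hG_condExp

/-- With `(X,Y)`, `r`, `g*`, `G` as in the consensual-aggregation setup,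
assume moreover `E[r_m(X)²] < ∞` for each `m`.  Then for every measurable `F : ℝ^M → ℝ`
with `E[F(r(X))²] < ∞` one has
`E[|F(r(X)) − g*(X)|²] ≤ min_{1≤m≤M} E[|r_m(X) − g*(X)|²] + E[|F(r(X)) − G(r(X))|²]`. -/
theorem risk_le_min_estimator_add_variance
    {Ω : Type*} [MeasurableSpace Ω] (μ : Measure Ω) [IsProbabilityMeasure μ]
    {d M : ℕ} (hM : 0 < M)
    (X : Ω → Fin d → ℝ) (Y : Ω → ℝ) (hX : Measurable X) (hY : Measurable Y)
    (hY2 : Integrable (fun ω => (Y ω) ^ 2) μ)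
    (r : (Fin d → ℝ) → (Fin M → ℝ)) (hr : Measurable r)
    (hr2 : ∀ m : Fin M, Integrable (fun ω => (r (X ω) m) ^ 2) μ)
    (gstar : (Fin d → ℝ) → ℝ) (hgstar : Measurable gstar)
    (hgstarCE : (fun ω => gstar (X ω)) =ᵐ[μ]
      μ[Y | MeasurableSpace.comap X inferInstance])
    (G : (Fin M → ℝ) → ℝ) (hG : Measurable G)
    (hGCE : (fun ω => G (r (X ω))) =ᵐ[μ]
      μ[Y | MeasurableSpace.comap (fun ω => r (X ω)) inferInstance])
    (F : (Fin M → ℝ) → ℝ) (hF : Measurable F)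
    (hF2 : Integrable (fun ω => (F (r (X ω))) ^ 2) μ) :
    ∫ ω, |F (r (X ω)) - gstar (X ω)| ^ 2 ∂μ
      ≤ (⨅ m : Fin M, ∫ ω, |r (X ω) m - gstar (X ω)| ^ 2 ∂μ)
        + ∫ ω, |F (r (X ω)) - G (r (X ω))| ^ 2 ∂μ := by
  have : Nonempty (Fin M) := ⟨⟨0, hM⟩⟩
  have memLp {f : Ω → ℝ} (hf : Measurable f) (hf2 : Integrable (fun ω => f ω ^ 2) μ) :
      MemLp f 2 μ :=
    (memLp_two_iff_integrable_sq hf.aestronglyMeasurable).2 hf2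
  have hrX := hr.comp hX
  simpa only [Real.norm_eq_abs] using
    risk_le_min_estimator_add_variance_general hX (memLp hY hY2) hr
      (fun m => memLp hrX.eval (hr2 m)) hgstarCE hGCE hF (memLp (hF.comp hrX) hF2)
end

section
/- Let K be a regular kernel with constants b, ρ, κ₀, and let (h_ℓ)_{ℓ≥1} be a sequence of positive bandwidths with h_ℓ → 0 and ℓ·h_ℓ^M → ∞ as ℓ → ∞. Then, with bandwidth h = h_ℓ, E[|G(r(X))·(Σ_{i=1}^ℓ W_{n,i}(X) − 1)|²] → 0 as ℓ → ∞, where the expectation is over both X and the sample (X_i,Y_i)_{i=1}^ℓ. -/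
open MeasureTheory Filter

/-- A kernel `K : ℝ^M → ℝ` is *regular* with constants `b, ρ > 0` and `κ₀ < ∞` if
`b·1_{‖z‖<ρ} ≤ K(z) ≤ 1` for every `z` and
`∫_{ℝ^M} sup_{u ∈ B(z,ρ)} K(u) dz = κ₀ < ∞`. -/
structure IsRegularKernel {M : ℕ} (K : EuclideanSpace ℝ (Fin M) → ℝ)
    (b ρ κ₀ : ℝ) : Prop where
  b_pos : 0 < b
  rho_pos : 0 < ρ
  measurable : Measurable K
  nonneg : ∀ z, 0 ≤ K z
  lower : ∀ z, ‖z‖ < ρ → b ≤ K z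
  le_one : ∀ z, K z ≤ 1
  lintegral_sup : ∫⁻ z, (⨆ u ∈ Metric.ball z ρ, ENNReal.ofReal (K u))
      = ENNReal.ofReal κ₀

/-- The weight `W_{n,i}(x) = K_h(r(x) − r(X_i)) / ∑_j K_h(r(x) − r(X_j))`
(with `K_h(z) = K(z/h)` and the convention `0/0 = 0`), where the sample points are
`X (ωs j)`, `j = 1,…,ℓ`. -/
noncomputable def kernelWeight {Ω : Type*} {d M : ℕ}
    (K : EuclideanSpace ℝ (Fin M) → ℝ) (h : ℝ)
    (r : (Fin d → ℝ) → EuclideanSpace ℝ (Fin M))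
    (X : Ω → Fin d → ℝ) {ℓ : ℕ} (ωs : Fin ℓ → Ω) (x : Fin d → ℝ) (i : Fin ℓ) : ℝ :=
  K (h⁻¹ • (r x - r (X (ωs i)))) / ∑ j, K (h⁻¹ • (r x - r (X (ωs j))))

/-- The kernel-based consensual aggregation estimator
`g_n(r(x)) = ∑_{i=1}^ℓ W_{n,i}(x)·Y_i`. -/
noncomputable def aggEstimator {Ω : Type*} {d M : ℕ}
    (K : EuclideanSpace ℝ (Fin M) → ℝ) (h : ℝ)
    (r : (Fin d → ℝ) → EuclideanSpace ℝ (Fin M))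
    (X : Ω → Fin d → ℝ) (Y : Ω → ℝ) {ℓ : ℕ} (ωs : Fin ℓ → Ω) (x : Fin d → ℝ) : ℝ :=
  ∑ i, kernelWeight K h r X ωs x i * Y (ωs i)

/- The weights sum to `1` unless every kernel value vanishes, and then they sum to `0`. Since `K` is
positive near the origin, the latter forces all sample points `r (X i)` to miss a ball of radius
`s ≍ h` around `r x`, an event of probability `(1 - ν (B (r x, s))) ^ ℓ`, where `ν` is the law of
`r (X)`. By Besicovitch differentiation of Haar measure with respect to `ν`, at `ν`-almost every `z`
the mass `ν (B (z, s))` is at least of order `min (s ^ M) 1`; the cap at `1` makes this uniform over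
all radii, large ones included. So the probability is at most `exp (-c ℓ min (s ^ M) 1) → 0`, and
dominated convergence concludes. -/

open Metric Module
open scoped Topology

section BallMass

variable {E : Type*} [NormedAddCommGroup E] [NormedSpace ℝ E] [FiniteDimensional ℝ E]
  [MeasurableSpace E] [BorelSpace E]

theorem ae_eventually_mul_pow_finrank_le_measureReal_closedBall
    (ν : Measure E) [IsLocallyFiniteMeasure ν] :
    ∀ᵐ z ∂ν, ∃ c > 0, ∀ᶠ s in 𝓝[>] (0 : ℝ), c * s ^ finrank ℝ E ≤ ν.real (closedBall z s) := by
  let haar : Measure E := Measure.addHaar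
  filter_upwards [Besicovitch.ae_tendsto_rnDeriv haar ν, haar.rnDeriv_lt_top ν]
    with z density_tendsto density_lt_top
  set C := haar.rnDeriv ν z + 1
  have C_ne_top : C ≠ ⊤ := by simp [C, density_lt_top.ne]
  have C_pos : 0 < C.toReal := ENNReal.toReal_pos (by simp [C]) C_ne_top
  have unit_ball_pos : 0 < haar.real (ball 0 1) :=
    ENNReal.toReal_pos (measure_ball_pos _ _ one_pos).ne' measure_ball_lt_top.ne
  refine ⟨haar.real (ball 0 1) / C.toReal, by positivity, ?_⟩
  filter_upwards [density_tendsto.eventually_lt_const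
    (ENNReal.lt_add_right density_lt_top.ne one_ne_zero), self_mem_nhdsWithin] with s hs s_pos
  have ball_ne_top : ν (closedBall z s) ≠ ⊤ := measure_closedBall_lt_top.ne
  have haar_le : haar (closedBall z s) ≤ C * ν (closedBall z s) :=
    (ENNReal.div_le_iff_le_mul (.inr C_ne_top) (.inl ball_ne_top)).1 hs.le
  have haar_real_le : haar.real (closedBall z s) ≤ C.toReal * ν.real (closedBall z s) := by
    simpa only [Measure.real, ENNReal.toReal_mul] using
      ENNReal.toReal_mono (ENNReal.mul_ne_top C_ne_top ball_ne_top) haar_le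
  rw [Measure.addHaar_real_closedBall _ _ (le_of_lt s_pos)] at haar_real_le
  rw [div_mul_eq_mul_div, div_le_iff₀ C_pos]
  linarith

theorem ae_mul_min_pow_finrank_one_le_measureReal_closedBall
    (ν : Measure E) [IsLocallyFiniteMeasure ν] :
    ∀ᵐ z ∂ν, ∃ c > 0, ∀ s > 0, c * min (s ^ finrank ℝ E) 1 ≤ ν.real (closedBall z s) := by
  filter_upwards [ae_eventually_mul_pow_finrank_le_measureReal_closedBall ν]
    with z ⟨c, c_pos, hc⟩
  obtain ⟨δ, δ_pos, hδ⟩ := mem_nhdsGT_iff_exists_Ioc_subset.1 hc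
  replace δ_pos : 0 < δ := δ_pos
  refine ⟨min c (c * δ ^ finrank ℝ E), by positivity, fun s s_pos => ?_⟩
  obtain hsδ | hδs := le_total s δ
  · calc min c (c * δ ^ finrank ℝ E) * min (s ^ finrank ℝ E) 1
        ≤ c * s ^ finrank ℝ E := by gcongr <;> exact min_le_left _ _
      _ ≤ ν.real (closedBall z s) := hδ ⟨s_pos, hsδ⟩
  · calc min c (c * δ ^ finrank ℝ E) * min (s ^ finrank ℝ E) 1
        ≤ c * δ ^ finrank ℝ E * 1 := by gcongr <;> exact min_le_right _ _
      _ ≤ ν.real (closedBall z δ) := (mul_one _).trans_le (hδ ⟨δ_pos, le_rfl⟩)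
      _ ≤ ν.real (closedBall z s) :=
        measureReal_mono (closedBall_subset_closedBall hδs) measure_closedBall_lt_top.ne

theorem tendsto_one_sub_pow_of_tendsto_mul_atTop {p : ℕ → ℝ} (hp : ∀ n, p n ≤ 1)
    (hnp : Tendsto (fun n : ℕ => n * p n) atTop atTop) :
    Tendsto (fun n => (1 - p n) ^ n) atTop (𝓝 0) := by
  refine squeeze_zero (fun n => pow_nonneg (sub_nonneg.2 (hp n)) n) (fun n => ?_)
    (Real.tendsto_exp_neg_atTop_nhds_zero.comp hnp)
  calc (1 - p n) ^ n
      ≤ Real.exp (-p n) ^ n :=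
        pow_le_pow_left₀ (sub_nonneg.2 (hp n)) (Real.one_sub_le_exp_neg _) n
    _ = Real.exp (-(n * p n)) := by rw [← Real.exp_nat_mul, mul_neg]

theorem ae_tendsto_measureReal_compl_closedBall_pow
    (ν : Measure E) [IsProbabilityMeasure ν] {s : ℕ → ℝ} (s_pos : ∀ n, 0 < s n)
    (hs : Tendsto (fun n : ℕ => n * s n ^ finrank ℝ E) atTop atTop) :
    ∀ᵐ z ∂ν, Tendsto (fun n => ν.real (closedBall z (s n))ᶜ ^ n) atTop (𝓝 0) := by
  filter_upwards [ae_mul_min_pow_finrank_one_le_measureReal_closedBall ν] with z ⟨c, c_pos, hc⟩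
  have min_tendsto :
      Tendsto (fun n : ℕ => n * min (s n ^ finrank ℝ E) 1) atTop atTop := by
    simp only [mul_min_of_nonneg _ _ (Nat.cast_nonneg _), mul_one]
    refine tendsto_atTop.2 fun b => ?_
    filter_upwards [hs.eventually_ge_atTop b, tendsto_natCast_atTop_atTop.eventually_ge_atTop b]
      with n using le_min
  have mass_tendsto : Tendsto (fun n : ℕ => n * ν.real (closedBall z (s n))) atTop atTop := by
    refine tendsto_atTop_mono (fun n => ?_) (min_tendsto.const_mul_atTop c_pos)
    calc c * (n * min (s n ^ finrank ℝ E) 1)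
        = n * (c * min (s n ^ finrank ℝ E) 1) := mul_left_comm _ _ _
      _ ≤ n * ν.real (closedBall z (s n)) := by gcongr; exact hc _ (s_pos n)
  simpa only [probReal_compl_eq_one_sub measurableSet_closedBall] using
    tendsto_one_sub_pow_of_tendsto_mul_atTop (fun _ => measureReal_le_one) mass_tendsto

end BallMass

section IsolationEvent

variable {Ω E : Type*} [PseudoMetricSpace E]

/-- The event that no sample point falls within distance `s` of the query point. An outcome `ω`
consists of the sample `ω.1`, indexed by `ι`, and the query `ω.2`; points are compared via `Z`. -/
def isolationEvent (ι : Type*) (Z : Ω → E) (s : ℝ) : Set ((ι → Ω) × Ω) :=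
  {ω | ∀ i, s < dist (Z (ω.1 i)) (Z ω.2)}

variable [MeasurableSpace Ω] [SecondCountableTopology E] [MeasurableSpace E]
  [OpensMeasurableSpace E] {ι : Type*} {Z : Ω → E} (s : ℝ)

theorem measurableSet_isolationEvent [Countable ι] (hZ : Measurable Z) :
    MeasurableSet (isolationEvent ι Z s) := by
  have eq_iInter : isolationEvent ι Z s = ⋂ i, {ω | s < dist (Z (ω.1 i)) (Z ω.2)} := by
    ext; simp [isolationEvent]
  rw [eq_iInter]
  exact .iInter fun i => measurableSet_lt measurable_const <|
    (hZ.comp ((measurable_pi_apply i).comp measurable_fst)).dist (hZ.comp measurable_snd)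

theorem setIntegral_isolationEvent [Fintype ι] (μ : Measure Ω) [IsFiniteMeasure μ]
    (hZ : Measurable Z) {f : Ω → ℝ} (hf : Integrable f μ) :
    ∫ ω in isolationEvent ι Z s, f ω.2 ∂((Measure.pi fun _ : ι => μ).prod μ) =
      ∫ x, (μ.map Z).real (closedBall (Z x) s)ᶜ ^ Fintype.card ι * f x ∂μ := by
  have event_measurable := measurableSet_isolationEvent (ι := ι) s hZ
  have section_eq (x : Ω) : (fun ω => (ω, x)) ⁻¹' isolationEvent ι Z s =
      Set.univ.pi fun _ => Z ⁻¹' (closedBall (Z x) s)ᶜ := by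
    ext; simp [isolationEvent]
  rw [← integral_indicator event_measurable,
    integral_prod_symm _ ((hf.comp_snd _).indicator event_measurable)]
  refine integral_congr_ae (.of_forall fun x => ?_)
  calc ∫ ω, (isolationEvent ι Z s).indicator (fun ω => f ω.2) (ω, x) ∂(Measure.pi fun _ => μ)
      = ∫ ω, ((fun ω => (ω, x)) ⁻¹' isolationEvent ι Z s).indicator (fun _ => f x) ω
          ∂(Measure.pi fun _ => μ) := rfl
    _ = (Measure.pi fun _ => μ).real ((fun ω => (ω, x)) ⁻¹' isolationEvent ι Z s) * f x :=
        integral_indicator_const _ (measurable_prodMk_right event_measurable)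
    _ = (μ.map Z).real (closedBall (Z x) s)ᶜ ^ Fintype.card ι * f x := by
        rw [section_eq, map_measureReal_apply hZ measurableSet_closedBall.compl]
        simp [Measure.real, Measure.pi_pi]

end IsolationEvent

theorem measurable_measureReal_compl_closedBall {E : Type*} [PseudoMetricSpace E]
    [SecondCountableTopology E] [MeasurableSpace E] [OpensMeasurableSpace E]
    (ν : Measure E) [SFinite ν] (s : ℝ) :
    Measurable fun z => ν.real (closedBall z s)ᶜ := by
  have far_measurable : MeasurableSet {p : E × E | p.2 ∈ (closedBall p.1 s)ᶜ} := by
    simpa only [Set.mem_compl_iff, mem_closedBall, not_le] using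
      measurableSet_lt measurable_const (measurable_snd.dist measurable_fst)
  exact (measurable_measure_prodMk_left far_measurable).ennreal_toReal

theorem tendsto_setIntegral_isolationEvent {Ω E : Type*} [MeasurableSpace Ω]
    [NormedAddCommGroup E] [NormedSpace ℝ E] [FiniteDimensional ℝ E]
    [MeasurableSpace E] [BorelSpace E] (μ : Measure Ω) [IsProbabilityMeasure μ]
    {Z : Ω → E} (hZ : Measurable Z) {f : Ω → ℝ} (hf : Integrable f μ)
    {s : ℕ → ℝ} (s_pos : ∀ n, 0 < s n)
    (hs : Tendsto (fun n : ℕ => n * s n ^ finrank ℝ E) atTop atTop) :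
    Tendsto (fun n => ∫ ω in isolationEvent (Fin n) Z (s n), f ω.2
        ∂((Measure.pi fun _ : Fin n => μ).prod μ)) atTop (𝓝 0) := by
  have : IsProbabilityMeasure (μ.map Z) := Measure.isProbabilityMeasure_map hZ.aemeasurable
  simp only [setIntegral_isolationEvent _ μ hZ hf, Fintype.card_fin]
  have miss_measurable (n : ℕ) :
      Measurable fun x => (μ.map Z).real (closedBall (Z x) (s n))ᶜ :=
    (measurable_measureReal_compl_closedBall (μ.map Z) (s n)).comp hZ
  have integrand_tendsto : ∀ᵐ x ∂μ,
      Tendsto (fun n => (μ.map Z).real (closedBall (Z x) (s n))ᶜ ^ n * f x) atTop (𝓝 0) := by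
    filter_upwards [ae_of_ae_map hZ.aemeasurable
      (ae_tendsto_measureReal_compl_closedBall_pow (μ.map Z) s_pos hs)] with x hx
    simpa only [zero_mul] using hx.mul_const (f x)
  rw [← integral_zero Ω ℝ (μ := μ)]
  refine tendsto_integral_of_dominated_convergence (fun x => ‖f x‖)
    (fun n => ((miss_measurable n).pow_const n).aestronglyMeasurable.mul hf.aestronglyMeasurable)
    hf.norm (fun n => .of_forall fun x => ?_) integrand_tendsto
  rw [norm_mul, norm_pow, Real.norm_of_nonneg measureReal_nonneg]
  exact mul_le_of_le_one_left (norm_nonneg _) (pow_le_one₀ measureReal_nonneg measureReal_le_one)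

section KernelWeight

variable {Ω : Type*} {d M ℓ : ℕ} {K : EuclideanSpace ℝ (Fin M) → ℝ} {h : ℝ}
  {r : (Fin d → ℝ) → EuclideanSpace ℝ (Fin M)} {X : Ω → Fin d → ℝ}

theorem sum_kernelWeight (ωs : Fin ℓ → Ω) (x : Fin d → ℝ) :
    ∑ i, kernelWeight K h r X ωs x i =
      (∑ i, K (h⁻¹ • (r x - r (X (ωs i))))) / ∑ i, K (h⁻¹ • (r x - r (X (ωs i)))) :=
  (Finset.sum_div _ _ _).symm

theorem sum_kernelWeight_eq_zero_or_one (ωs : Fin ℓ → Ω) (x : Fin d → ℝ) :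
    ∑ i, kernelWeight K h r X ωs x i = 0 ∨ ∑ i, kernelWeight K h r X ωs x i = 1 := by
  rw [sum_kernelWeight]
  exact (eq_or_ne _ 0).imp (fun sum_eq => by rw [sum_eq, div_zero]) div_self

theorem measurable_sum_kernelWeight [MeasurableSpace Ω] (hK : Measurable K)
    (hZ : Measurable fun ω => r (X ω)) :
    Measurable fun ω : (Fin ℓ → Ω) × Ω => ∑ i, kernelWeight K h r X ω.1 (X ω.2) i := by
  have kernel_measurable (i : Fin ℓ) : Measurable fun ω : (Fin ℓ → Ω) × Ω =>
      K (h⁻¹ • (r (X ω.2) - r (X (ω.1 i)))) :=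
    hK.comp <| ((hZ.comp measurable_snd).sub
      (hZ.comp ((measurable_pi_apply i).comp measurable_fst))).const_smul h⁻¹
  simp only [sum_kernelWeight]
  exact (Finset.measurable_sum _ fun i _ => kernel_measurable i).div
    (Finset.measurable_sum _ fun i _ => kernel_measurable i)

variable {ρ s : ℝ}

theorem sum_kernelWeight_eq_one_of_notMem_isolationEvent
    (K_nonneg : ∀ z, 0 ≤ K z) (K_pos : ∀ z, ‖z‖ < ρ → 0 < K z) (h_pos : 0 < h) (hs : s < h * ρ)
    {ω : (Fin ℓ → Ω) × Ω} (hω : ω ∉ isolationEvent (Fin ℓ) (fun ω => r (X ω)) s) :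
    ∑ i, kernelWeight K h r X ω.1 (X ω.2) i = 1 := by
  obtain ⟨i, hi⟩ : ∃ i, dist (r (X (ω.1 i))) (r (X ω.2)) ≤ s := by
    simpa [isolationEvent] using hω
  have norm_lt : ‖h⁻¹ • (r (X ω.2) - r (X (ω.1 i)))‖ < ρ := by
    rw [norm_smul, Real.norm_of_nonneg (inv_pos.2 h_pos).le, inv_mul_lt_iff₀ h_pos,
      ← dist_eq_norm, dist_comm]
    exact hi.trans_lt hs
  have sum_pos : 0 < ∑ j, K (h⁻¹ • (r (X ω.2) - r (X (ω.1 j)))) :=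
    Finset.sum_pos' (fun _ _ => K_nonneg _) ⟨i, Finset.mem_univ i, K_pos _ norm_lt⟩
  rw [sum_kernelWeight, div_self sum_pos.ne']

theorem sq_abs_mul_sum_kernelWeight_sub_one_le_indicator
    (K_nonneg : ∀ z, 0 ≤ K z) (K_pos : ∀ z, ‖z‖ < ρ → 0 < K z) (h_pos : 0 < h) (hs : s < h * ρ)
    (f : Ω → ℝ) (ω : (Fin ℓ → Ω) × Ω) :
    |f ω.2 * (∑ i, kernelWeight K h r X ω.1 (X ω.2) i - 1)| ^ 2 ≤
      (isolationEvent (Fin ℓ) (fun ω => r (X ω)) s).indicator (fun ω => f ω.2 ^ 2) ω := by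
  by_cases hω : ω ∈ isolationEvent (Fin ℓ) (fun ω => r (X ω)) s
  · rw [Set.indicator_of_mem hω]
    obtain sum_eq | sum_eq := sum_kernelWeight_eq_zero_or_one (K := K) (h := h) (r := r)
      (X := X) ω.1 (X ω.2) <;> simp [sum_eq, sq_nonneg]
  · simp [hω, sum_kernelWeight_eq_one_of_notMem_isolationEvent K_nonneg K_pos h_pos hs hω]

end KernelWeight

theorem aggWeights_mass_term_tendsto_zero_general
    {Ω : Type*} [MeasurableSpace Ω] (μ : Measure Ω) [IsProbabilityMeasure μ] {d M : ℕ}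
    {K : EuclideanSpace ℝ (Fin M) → ℝ} (hK : Measurable K) (K_nonneg : ∀ z, 0 ≤ K z)
    {ρ : ℝ} (ρ_pos : 0 < ρ) (K_pos : ∀ z, ‖z‖ < ρ → 0 < K z)
    {X : Ω → Fin d → ℝ} {r : (Fin d → ℝ) → EuclideanSpace ℝ (Fin M)}
    (hZ : Measurable fun ω => r (X ω)) {f : Ω → ℝ} (hf : MemLp f 2 μ)
    {h : ℕ → ℝ} (h_pos : ∀ ℓ, 0 < h ℓ)
    (hℓh : Tendsto (fun ℓ : ℕ => (ℓ : ℝ) * h ℓ ^ M) atTop atTop) :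
    (∀ ℓ : ℕ, Integrable (fun ω : (Fin ℓ → Ω) × Ω =>
        |f ω.2 * ((∑ i, kernelWeight K (h ℓ) r X ω.1 (X ω.2) i) - 1)| ^ 2)
        ((Measure.pi fun _ : Fin ℓ => μ).prod μ)) ∧
      Tendsto (fun ℓ : ℕ =>
        ∫ ω : (Fin ℓ → Ω) × Ω,
          |f ω.2 * ((∑ i, kernelWeight K (h ℓ) r X ω.1 (X ω.2) i) - 1)| ^ 2
          ∂((Measure.pi fun _ : Fin ℓ => μ).prod μ))
      atTop (𝓝 0) := by
  set s : ℕ → ℝ := fun ℓ => h ℓ * (ρ / 2)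
  have s_tendsto : Tendsto (fun ℓ : ℕ => ℓ * s ℓ ^ finrank ℝ (EuclideanSpace ℝ (Fin M)))
      atTop atTop := by
    simpa only [s, finrank_euclideanSpace_fin, mul_pow, mul_assoc] using
      hℓh.atTop_mul_const (pow_pos (half_pos ρ_pos) M)
  have event_measurable (ℓ : ℕ) := measurableSet_isolationEvent (ι := Fin ℓ) (s ℓ) hZ
  have dominated (ℓ : ℕ) := sq_abs_mul_sum_kernelWeight_sub_one_le_indicator (ℓ := ℓ) (r := r)
    (X := X) K_nonneg K_pos (h_pos ℓ) (mul_lt_mul_of_pos_left (half_lt_self ρ_pos) (h_pos ℓ)) f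
  have majorant_integrable (ℓ : ℕ) :=
    (hf.integrable_sq.comp_snd (Measure.pi fun _ : Fin ℓ => μ)).indicator (event_measurable ℓ)
  refine ⟨fun ℓ => (majorant_integrable ℓ).mono' ?_ (.of_forall fun ω => ?_),
    squeeze_zero (fun _ => integral_nonneg fun _ => sq_nonneg _) (fun ℓ => ?_)
      (tendsto_setIntegral_isolationEvent μ hZ hf.integrable_sq
        (fun ℓ => mul_pos (h_pos ℓ) (half_pos ρ_pos)) s_tendsto)⟩
  · exact (hf.aestronglyMeasurable.comp_snd.mul
      ((measurable_sum_kernelWeight hK hZ).sub_const 1).aestronglyMeasurable).norm.pow 2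
  · exact (Real.norm_of_nonneg (sq_nonneg _)).trans_le (dominated ℓ ω)
  · rw [← integral_indicator (event_measurable ℓ)]
    exact integral_mono_of_nonneg (.of_forall fun _ => sq_nonneg _) (majorant_integrable ℓ)
      (.of_forall (dominated ℓ))

/-- (Proposition A.3.)  Let `K` be a regular kernel with constants
`b, ρ, κ₀`, and let `(h_ℓ)` be positive bandwidths with `h_ℓ → 0` and `ℓ·h_ℓ^M → ∞`.
Then, with bandwidth `h_ℓ`,
`E[|G(r(X))·(∑_{i=1}^ℓ W_{n,i}(X) − 1)|²] → 0` as `ℓ → ∞`, the expectation being over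
both `X` and the sample `(X_i,Y_i)_{i=1}^ℓ`. -/
theorem aggWeights_mass_term_tendsto_zero
    {Ω : Type*} [MeasurableSpace Ω] (μ : Measure Ω) [IsProbabilityMeasure μ]
    {d M : ℕ} (hM : 0 < M)
    (K : EuclideanSpace ℝ (Fin M) → ℝ) (b ρ κ₀ : ℝ)
    (hK : IsRegularKernel K b ρ κ₀)
    (X : Ω → Fin d → ℝ) (Y : Ω → ℝ) (hX : Measurable X) (hY : Measurable Y)
    (hY2 : Integrable (fun ω => (Y ω) ^ 2) μ)
    (r : (Fin d → ℝ) → EuclideanSpace ℝ (Fin M)) (hr : Measurable r)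
    (hrBdd : ∃ R : ℝ, ∀ x, ‖r x‖ ≤ R)
    (G : EuclideanSpace ℝ (Fin M) → ℝ) (hG : Measurable G)
    (hGCE : (fun ω => G (r (X ω))) =ᵐ[μ]
      μ[Y | MeasurableSpace.comap (fun ω => r (X ω)) inferInstance])
    (h : ℕ → ℝ) (hpos : ∀ ℓ, 0 < h ℓ)
    (h0 : Tendsto h atTop (nhds 0))
    (hℓh : Tendsto (fun ℓ : ℕ => (ℓ : ℝ) * h ℓ ^ M) atTop atTop) :
    Tendsto (fun ℓ : ℕ =>
        ∫ ω : (Fin ℓ → Ω) × Ω,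
          |G (r (X ω.2)) * ((∑ i, kernelWeight K (h ℓ) r X ω.1 (X ω.2) i) - 1)| ^ 2
          ∂((Measure.pi fun _ : Fin ℓ => μ).prod μ))
      atTop (nhds 0) := by
  have hY_L2 : MemLp Y 2 μ := (memLp_two_iff_integrable_sq hY.aestronglyMeasurable).2 hY2
  exact (aggWeights_mass_term_tendsto_zero_general μ hK.measurable hK.nonneg hK.rho_pos
    (fun z hz => hK.b_pos.trans_le (hK.lower z hz)) (hr.comp hX)
    ((memLp_congr_ae hGCE).2 (hY_L2.condExp one_le_two)) hpos hℓh).2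
end

section
/- For every natural number M ≥ 1 and every real R > 0 there exists a constant C₀ = C₀(M,R) > 0 such that for every Borel probability measure ν on ℝ^M whose support is contained in the closed Euclidean ball of radius R centered at the origin, and every δ ∈ (0,1], one has ∫ 1/ν(B(y,δ)) ν(dy) ≤ C₀·δ^{−M}, where the integrand takes values in [0,∞] and B(y,δ) is the open Euclidean ball of center y and radius δ (for ν-almost every y one has ν(B(y,δ)) > 0). -/
/-!
If `dist x y < δ / 2` then `ball x (δ / 2) ⊆ ball y δ`, so `1 / ν (ball y δ)` is at most
`1 / ν (ball x (δ / 2))`. Averaging this over `x ∈ ball y (δ / 2)` with respect to a Haar measure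
`μ`, integrating in `y` against `ν` and exchanging the integrals, the inner integral over
`y ∈ ball x (δ / 2)` cancels the factor `1 / ν (ball x (δ / 2))`. What remains is at most the
`μ`-measure of the `δ / 2`-neighbourhood of a set carrying `ν`, divided by `μ (ball 0 (δ / 2))`;
when that set is a closed ball of radius `R`, scaling evaluates the quotient to
`(1 + 2 * R / δ) ^ n` in dimension `n`.
-/

open MeasureTheory
open Metric Module
open scoped ENNReal

section PseudoMetricSpace

variable {X : Type*} [PseudoMetricSpace X] [MeasurableSpace X]

theorem measure_ball_eq_zero_of_notMem_thickening {ν : Measure X} {s : Set X} (hs : ν sᶜ = 0)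
    {r : ℝ} {x : X} (hx : x ∉ thickening r s) : ν (ball x r) = 0 :=
  measure_mono_null (fun y hy hys ↦ hx (mem_thickening_iff.2 ⟨y, hys, mem_ball'.1 hy⟩)) hs

variable [SecondCountableTopology X]

theorem ae_measure_ball_pos (ν : Measure X) {r : ℝ} (hr : 0 < r) :
    ∀ᵐ y ∂ν, 0 < ν (ball y r) := by
  filter_upwards [ν.support_mem_ae] with y hy
  exact (ν.mem_support_iff_forall y).1 hy _ (ball_mem_nhds y hr)

variable [OpensMeasurableSpace X]

theorem measurableSet_dist_lt (r : ℝ) : MeasurableSet {p : X × X | dist p.2 p.1 < r} :=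
  (isOpen_lt (by fun_prop) continuous_const).measurableSet

theorem measurable_measure_ball (ν : Measure X) [SFinite ν] (r : ℝ) :
    Measurable fun y ↦ ν (ball y r) :=
  measurable_measure_prodMk_left (measurableSet_dist_lt r)

theorem lintegral_setLIntegral_ball (μ ν : Measure X) [SFinite μ] [SFinite ν] (r : ℝ)
    {f : X → ℝ≥0∞} (hf : Measurable f) :
    ∫⁻ y, ∫⁻ x in ball y r, f x ∂μ ∂ν = ∫⁻ x, f x * ν (ball x r) ∂μ := by
  have hF : Measurable (Function.uncurry fun y x ↦ (ball y r).indicator f x) :=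
    (hf.comp measurable_snd).indicator (measurableSet_dist_lt r)
  have h_symm (x y : X) :
      (ball y r).indicator f x = (ball x r).indicator (fun _ ↦ f x) y := by
    simp only [Set.indicator, mem_ball, dist_comm]
  calc ∫⁻ y, ∫⁻ x in ball y r, f x ∂μ ∂ν
      = ∫⁻ y, ∫⁻ x, (ball y r).indicator f x ∂μ ∂ν := by
        simp only [lintegral_indicator measurableSet_ball]
    _ = ∫⁻ x, ∫⁻ y, (ball y r).indicator f x ∂ν ∂μ := lintegral_lintegral_swap hF.aemeasurable
    _ = ∫⁻ x, f x * ν (ball x r) ∂μ := by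
        simp only [h_symm, lintegral_indicator_const measurableSet_ball]

theorem lintegral_inv_measure_ball_mul_measure_ball_le (μ ν : Measure X) [SFinite μ] [SFinite ν]
    {s : Set X} (hs : ν sᶜ = 0) (δ : ℝ) :
    ∫⁻ y, (ν (ball y δ))⁻¹ * μ (ball y (δ / 2)) ∂ν ≤ μ (thickening (δ / 2) s) := by
  have h_inv {x y : X} (hx : x ∈ ball y (δ / 2)) :
      (ν (ball y δ))⁻¹ ≤ (ν (ball x (δ / 2)))⁻¹ :=
    ENNReal.inv_le_inv.2 <| measure_mono <| ball_subset_ball' <| by linarith [mem_ball.1 hx]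
  have h_le_indicator (x : X) :
      (ν (ball x (δ / 2)))⁻¹ * ν (ball x (δ / 2)) ≤ (thickening (δ / 2) s).indicator 1 x := by
    by_cases hx : x ∈ thickening (δ / 2) s
    · simpa only [Set.indicator_of_mem hx, Pi.one_apply] using ENNReal.inv_mul_le_one _
    · simp only [measure_ball_eq_zero_of_notMem_thickening hs hx, mul_zero, zero_le]
  calc ∫⁻ y, (ν (ball y δ))⁻¹ * μ (ball y (δ / 2)) ∂ν
      = ∫⁻ y, ∫⁻ _ in ball y (δ / 2), (ν (ball y δ))⁻¹ ∂μ ∂ν := by simp only [setLIntegral_const]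
    _ ≤ ∫⁻ y, ∫⁻ x in ball y (δ / 2), (ν (ball x (δ / 2)))⁻¹ ∂μ ∂ν :=
        lintegral_mono fun y ↦ setLIntegral_mono' measurableSet_ball fun x hx ↦ h_inv hx
    _ = ∫⁻ x, (ν (ball x (δ / 2)))⁻¹ * ν (ball x (δ / 2)) ∂μ :=
        lintegral_setLIntegral_ball μ ν (δ / 2) (measurable_measure_ball ν (δ / 2)).inv
    _ ≤ ∫⁻ x, (thickening (δ / 2) s).indicator 1 x ∂μ := lintegral_mono h_le_indicator
    _ = μ (thickening (δ / 2) s) := lintegral_indicator_one isOpen_thickening.measurableSet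

end PseudoMetricSpace

section FiniteDimensional

variable {E : Type*} [NormedAddCommGroup E] [NormedSpace ℝ E] [FiniteDimensional ℝ E]
  [MeasurableSpace E] [BorelSpace E]

theorem addHaar_thickening_closedBall (μ : Measure E) [μ.IsAddHaarMeasure] (c : E) {R r : ℝ}
    (hR : 0 ≤ R) (hr : 0 < r) :
    μ (thickening r (closedBall c R)) =
      ENNReal.ofReal ((1 + R / r) ^ finrank ℝ E) * μ (ball 0 r) := by
  rw [thickening_closedBall hr hR, ← Measure.addHaar_ball_mul_of_pos μ c (by positivity),
    add_mul, one_mul, div_mul_cancel₀ R hr.ne']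

theorem integral_inv_ball_measure_le_general (ν : Measure E) [SFinite ν] {c : E} {R : ℝ}
    (hR : 0 ≤ R) (hν : ν (closedBall c R)ᶜ = 0) {δ : ℝ} (hδ : 0 < δ) :
    (∀ᵐ y ∂ν, 0 < ν (ball y δ)) ∧
      ∫⁻ y, (ν (ball y δ))⁻¹ ∂ν ≤ ENNReal.ofReal ((1 + 2 * R / δ) ^ finrank ℝ E) := by
  refine ⟨ae_measure_ball_pos ν hδ, ?_⟩
  let μ : Measure E := Measure.addHaar
  have h_pos : μ (ball 0 (δ / 2)) ≠ 0 := (measure_ball_pos μ 0 (half_pos hδ)).ne'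
  have h_fin : μ (ball 0 (δ / 2)) ≠ ∞ := measure_ball_lt_top.ne
  refine (ENNReal.mul_le_mul_iff_left h_pos h_fin).1 ?_
  calc (∫⁻ y, (ν (ball y δ))⁻¹ ∂ν) * μ (ball 0 (δ / 2))
      = ∫⁻ y, (ν (ball y δ))⁻¹ * μ (ball y (δ / 2)) ∂ν := by
        simp only [Measure.addHaar_ball_center, lintegral_mul_const' _ _ h_fin]
    _ ≤ μ (thickening (δ / 2) (closedBall c R)) :=
        lintegral_inv_measure_ball_mul_measure_ball_le μ ν hν δ
    _ = ENNReal.ofReal ((1 + 2 * R / δ) ^ finrank ℝ E) * μ (ball 0 (δ / 2)) := by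
        rw [addHaar_thickening_closedBall μ c hR (half_pos hδ), div_div_eq_mul_div, mul_comm R]

end FiniteDimensional

/-- For every `M ≥ 1` and `R > 0` there is `C₀ = C₀(M,R) > 0` such that
for every Borel probability measure `ν` on `ℝ^M` supported in the closed ball of radius
`R` centered at the origin, and every `δ ∈ (0,1]`, one has
`∫ 1/ν(B(y,δ)) ν(dy) ≤ C₀·δ^{−M}` (the integrand taking values in `[0,∞]`; moreover for
`ν`-almost every `y` one has `ν(B(y,δ)) > 0`). -/
theorem integral_inv_ball_measure_le
    (M : ℕ) (hM : 1 ≤ M) (R : ℝ) (hR : 0 < R) :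
    ∃ C₀ : ℝ, 0 < C₀ ∧
      ∀ ν : Measure (EuclideanSpace ℝ (Fin M)), IsProbabilityMeasure ν →
        ν (Metric.closedBall 0 R)ᶜ = 0 →
        ∀ δ : ℝ, 0 < δ → δ ≤ 1 →
          (∀ᵐ y ∂ν, 0 < ν (Metric.ball y δ)) ∧
          ∫⁻ y, (ν (Metric.ball y δ))⁻¹ ∂ν ≤ ENNReal.ofReal (C₀ / δ ^ M) := by
  refine ⟨(1 + 2 * R) ^ M, by positivity, fun ν _ hν δ hδ hδ1 ↦
    (integral_inv_ball_measure_le_general ν hR.le hν hδ).imp_right fun h ↦ h.trans ?_⟩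
  rw [finrank_euclideanSpace_fin, ← div_pow, add_div]
  gcongr
  exact (one_le_div hδ).2 hδ1
end

section
/- For every natural number M ≥ 1 and every ρ > 0 there exist a countable family of points (x_i)_{i≥1} in ℝ^M and a constant C = C(M,ρ) > 0 such that the open balls B(x_i, ρ/2) cover ℝ^M and, for every function K : ℝ^M → [0,∞], Σ_{i≥1} sup_{u ∈ B(x_i, ρ/2)} K(u) ≤ C · ∫⁻_{ℝ^M} sup_{u ∈ B(z,ρ)} K(u) dz, where ∫⁻ denotes the lower Lebesgue integral with respect to Lebesgue measure on ℝ^M (so that no measurability of the integrand is required). -/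
open MeasureTheory
open scoped ENNReal

/-! Take the centres `x i` to be a maximal `2δ`-separated set with `2δ < s < r` and `s + δ ≤ r`.
Maximality makes the balls `B(x i, s)` cover the space, while separation makes the balls
`B(x i, δ)` disjoint. If `z ∈ B(x i, δ)`, then `B(x i, s) ⊆ B(z, r)`, so the `i`-th supremum is at
most the average over `B(x i, δ)` of `z ↦ sup_{B(z, r)} K`. The measures of these balls are bounded
below, and their disjointness lets the integrals add up to at most the integral over the space. -/

open Metric Set Bornology TopologicalSpace
open scoped NNReal

section SeparatedCover

theorem exists_isSeparated_isCover {X : Type*} [PseudoEMetricSpace X] (ε : ℝ≥0) (s : Set X) :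
    ∃ N ⊆ s, IsSeparated ε N ∧ IsCover ε s N := by
  obtain ⟨N, hN⟩ : ∃ N, Maximal (· ∈ {N | N ⊆ s ∧ IsSeparated ε N}) N :=
    zorn_subset _ fun c hc hchain ↦
      ⟨⋃₀ c, ⟨sUnion_subset fun t ht ↦ (hc ht).1,
        (pairwise_sUnion hchain.directedOn).2 fun t ht ↦ (hc ht).2⟩,
        fun t ht ↦ subset_sUnion_of_mem ht⟩
  exact ⟨N, hN.prop.1, hN.prop.2, .of_maximal_isSeparated hN⟩

variable {X : Type*} [PseudoMetricSpace X]

theorem pairwiseDisjoint_ball_of_isSeparated {δ : ℝ≥0} {N : Set X}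
    (hN : IsSeparated (2 * δ : ℝ≥0) N) : N.PairwiseDisjoint (ball · δ) := by
  intro a ha b hb hab
  have hdist : 2 * δ < nndist a b := by
    simpa only [edist_nndist, ENNReal.coe_lt_coe] using hN ha hb hab
  refine ball_disjoint_ball ?_
  rw [← two_mul, ← coe_nndist]
  exact_mod_cast hdist.le

theorem infinite_of_isCover_of_not_isBounded {ε : ℝ≥0} {s N : Set X} (hN : IsCover ε s N)
    (hs : ¬ IsBounded s) : N.Infinite := fun hfin ↦
  hs <| ((isBounded_biUnion hfin).2 fun _ _ ↦ isBounded_closedBall).subset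
    hN.subset_iUnion_closedBall

theorem exists_seq_iUnion_ball_eq_univ_and_pairwise_disjoint_ball [SeparableSpace X]
    (hX : ¬ IsBounded (univ : Set X)) {δ s : ℝ} (hδ : 0 < δ) (hδs : 2 * δ < s) :
    ∃ x : ℕ → X, ⋃ i, ball (x i) s = univ ∧
      Pairwise (Function.onFun Disjoint fun i ↦ ball (x i) δ) := by
  lift δ to ℝ≥0 using hδ.le
  obtain ⟨N, -, hsep, hcover⟩ := exists_isSeparated_isCover (2 * δ) (univ : Set X)
  have hdisj := pairwiseDisjoint_ball_of_isSeparated hsep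
  have : Countable N := (hdisj.countable_of_isOpen (fun _ _ ↦ isOpen_ball)
    fun a _ ↦ ⟨a, mem_ball_self hδ⟩).to_subtype
  have : Infinite N := (infinite_of_isCover_of_not_isBounded hcover hX).to_subtype
  obtain ⟨e⟩ : Nonempty (ℕ ≃ N) := nonempty_equiv_of_countable
  refine ⟨fun i ↦ e i, univ_subset_iff.1 ?_, fun i j hij ↦ ?_⟩
  · calc
      univ ⊆ ⋃ a ∈ N, closedBall a ↑(2 * δ) := hcover.subset_iUnion_closedBall
      _ ⊆ ⋃ a ∈ N, ball a s := iUnion₂_mono fun a _ ↦ closedBall_subset_ball (mod_cast hδs)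
      _ = ⋃ i, ball (e i : X) s := by
        rw [biUnion_eq_iUnion, ← e.surjective.iUnion_comp]
  · exact hdisj (e i).2 (e j).2 (Subtype.val_injective.ne (e.injective.ne hij))

end SeparatedCover

section SupBall

theorem mul_tsum_le_lintegral_of_disjoint {α ι : Type*} [MeasurableSpace α] {μ : Measure α}
    {A : ι → Set α} {c : ℝ≥0∞} {a : ι → ℝ≥0∞} {f : α → ℝ≥0∞} (hA : ∀ i, MeasurableSet (A i))
    (hdisj : Pairwise (Function.onFun Disjoint A)) (hc : ∀ i, c ≤ μ (A i))
    (haf : ∀ i, ∀ z ∈ A i, a i ≤ f z) : c * ∑' i, a i ≤ ∫⁻ z, f z ∂μ := by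
  have hterm (i : ι) : c * a i ≤ ∫⁻ z in A i, f z ∂μ := calc
    c * a i ≤ μ (A i) * a i := by gcongr; exact hc i
    _ = ∫⁻ _ in A i, a i ∂μ := by rw [setLIntegral_const, mul_comm]
    _ ≤ ∫⁻ z in A i, f z ∂μ := setLIntegral_mono' (hA i) (haf i)
  rw [← ENNReal.tsum_mul_left, ENNReal.tsum_eq_iSup_sum]
  refine iSup_le fun t ↦ ?_
  calc
    ∑ i ∈ t, c * a i ≤ ∑ i ∈ t, ∫⁻ z in A i, f z ∂μ := Finset.sum_le_sum fun i _ ↦ hterm i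
    _ = ∫⁻ z in ⋃ i ∈ t, A i, f z ∂μ :=
      (lintegral_biUnion_finset (hdisj.set_pairwise _) (fun i _ ↦ hA i) f).symm
    _ ≤ ∫⁻ z, f z ∂μ := setLIntegral_le_lintegral _ _

variable {X : Type*} [PseudoMetricSpace X]

theorem iSup_ball_le_iSup_ball_of_mem_ball {α : Type*} [CompleteLattice α] {s δ r : ℝ}
    (hr : s + δ ≤ r) (K : X → α) {x z : X} (hz : z ∈ ball x δ) :
    ⨆ u ∈ ball x s, K u ≤ ⨆ u ∈ ball z r, K u := by
  refine biSup_mono fun u hu ↦ ball_subset_ball' ?_ hu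
  rw [mem_ball'] at hz
  linarith

theorem tsum_sup_ball_le_lintegral_sup_general [SeparableSpace X] [MeasurableSpace X]
    [OpensMeasurableSpace X] {μ : Measure X} (hX : ¬ IsBounded (univ : Set X))
    (hμ : ∀ δ > 0, 0 < ⨅ x, μ (ball x δ)) {s r : ℝ} (hs : 0 < s) (hsr : s < r) :
    ∃ (x : ℕ → X) (C : ℝ), 0 < C ∧ ⋃ i, ball (x i) s = univ ∧
      ∀ K : X → ℝ≥0∞,
        ∑' i, ⨆ u ∈ ball (x i) s, K u ≤
          ENNReal.ofReal C * ∫⁻ z, ⨆ u ∈ ball z r, K u ∂μ := by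
  obtain ⟨δ, hδ, hδ_lt⟩ : ∃ δ, 0 < δ ∧ δ < min (s / 2) (r - s) :=
    exists_between (lt_min (half_pos hs) (sub_pos.2 hsr))
  obtain ⟨hδs, hδr⟩ := lt_min_iff.1 hδ_lt
  obtain ⟨x, hcover, hdisj⟩ :=
    exists_seq_iUnion_ball_eq_univ_and_pairwise_disjoint_ball hX hδ (by linarith : 2 * δ < s)
  obtain ⟨c, hc, hcμ⟩ := ENNReal.lt_iff_exists_nnreal_btwn.1 (hμ δ hδ)
  have hc_pos : 0 < c := ENNReal.coe_pos.1 hc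
  refine ⟨x, (c⁻¹ : ℝ≥0), NNReal.coe_pos.2 (inv_pos.2 hc_pos), hcover, fun K ↦ ?_⟩
  rw [ENNReal.ofReal_coe_nnreal, ENNReal.coe_inv hc_pos.ne',
    ← ENNReal.mul_le_iff_le_inv hc.ne' ENNReal.coe_ne_top]
  exact mul_tsum_le_lintegral_of_disjoint (fun _ ↦ measurableSet_ball) hdisj
    (fun i ↦ hcμ.le.trans (iInf_le _ (x i)))
    fun i z ↦ iSup_ball_le_iSup_ball_of_mem_ball (by linarith) K

end SupBall

theorem iInf_addHaar_ball_pos {E : Type*} [NormedAddCommGroup E] [MeasurableSpace E] [BorelSpace E]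
    (μ : Measure E) [μ.IsAddHaarMeasure] {δ : ℝ} (hδ : 0 < δ) : 0 < ⨅ x, μ (ball x δ) := by
  simpa only [Measure.addHaar_ball_center, iInf_const] using measure_ball_pos μ (0 : E) hδ

/-- For every `M ≥ 1` and `ρ > 0` there exist a countable family of
points `(x_i)` in `ℝ^M` and a constant `C = C(M,ρ) > 0` such that the balls `B(x_i,ρ/2)`
cover `ℝ^M` and, for every function `K : ℝ^M → [0,∞]`,
`∑_i sup_{u ∈ B(x_i,ρ/2)} K(u) ≤ C·∫⁻_{ℝ^M} sup_{u ∈ B(z,ρ)} K(u) dz`,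
where `∫⁻` is the lower Lebesgue integral (no measurability of the integrand needed). -/
theorem tsum_sup_ball_le_lintegral_sup
    (M : ℕ) (hM : 1 ≤ M) (ρ : ℝ) (hρ : 0 < ρ) :
    ∃ (x : ℕ → EuclideanSpace ℝ (Fin M)) (C : ℝ), 0 < C ∧
      (⋃ i, Metric.ball (x i) (ρ / 2)) = Set.univ ∧
      ∀ K : EuclideanSpace ℝ (Fin M) → ℝ≥0∞,
        (∑' i, ⨆ u ∈ Metric.ball (x i) (ρ / 2), K u)
          ≤ ENNReal.ofReal C * ∫⁻ z, ⨆ u ∈ Metric.ball z ρ, K u := by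
  have : Nonempty (Fin M) := Fin.pos_iff_nonempty.1 hM
  exact tsum_sup_ball_le_lintegral_sup_general (NormedSpace.unbounded_univ ℝ _)
    (fun _ ↦ iInf_addHaar_ball_pos volume) (half_pos hρ) (half_lt_self hρ)
end

section
/- For every natural number M ≥ 1 and every real R > 0 there exists a constant C₀ = C₀(M,R) > 0 such that for every Borel probability measure ν on ℝ^M whose support is contained in the closed Euclidean ball of radius R centered at the origin, every δ ∈ (0,1], and every integer n ≥ 1, one has ∫ (1 − ν(B(y,δ)))^n ν(dy) ≤ C₀/(n·δ^M). In particular, if Z, Z_1,…,Z_n are i.i.d. with law ν, the probability that every Z_j lies at Euclidean distance at least δ from Z is at most C₀/(n·δ^M). -/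
open MeasureTheory

/-!
Cover the support by `N` balls `A` of radius `δ / 3`. If `y ∈ A` then `A ⊆ B(y, δ)`, so the integral
over `A` is at most `(1 - ν A) ^ n * ν A ≤ 1 / n`, whatever `ν A` is; hence the whole integral is at
most `N / n`. By a volume comparison, a ball of radius `R ≥ δ / 2` in a `d`-dimensional normed space
can be covered with `N ≤ (1 + 6 R / δ) ^ d ≤ (8 R / δ) ^ d`; if `δ > 2 R` the integral vanishes. The
probability in the second claim is the same integral, by independence.
-/

open Metric Module
open scoped ENNReal NNReal

lemma one_sub_pow_mul_le_inv_natCast (p : ℝ≥0∞) (n : ℕ) : (1 - p) ^ n * p ≤ (n : ℝ≥0∞)⁻¹ := by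
  rcases lt_or_ge 1 p with hp | hp
  · rcases eq_or_ne n 0 with rfl | hn
    · simp
    · simp [tsub_eq_zero_of_le hp.le, hn]
  · rw [ENNReal.le_inv_iff_mul_le]
    have binomial_term : (1 - p) ^ n * p * (n + 1) ≤ (1 - p + p) ^ (n + 1) := by
      rw [add_pow]
      simpa using Finset.single_le_sum
        (f := fun k => (1 - p) ^ k * p ^ (n + 1 - k) * ((n + 1).choose k : ℝ≥0∞))
        (fun _ _ => zero_le) (Finset.mem_range.2 (by omega : n < n + 1 + 1))
    calc (1 - p) ^ n * p * n ≤ (1 - p) ^ n * p * (n + 1) := by gcongr; exact le_self_add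
      _ ≤ (1 - p + p) ^ (n + 1) := binomial_term
      _ = 1 := by rw [tsub_add_cancel_of_le hp, one_pow]

section PseudoMetricSpace

variable {X : Type*} [PseudoMetricSpace X]

lemma closedBall_subset_ball_of_mem {c y : X} {R δ : ℝ} (hRδ : 2 * R < δ)
    (hy : y ∈ closedBall c R) : closedBall c R ⊆ ball y δ :=
  fun x hx => (dist_triangle_right x y c).trans_lt <| by
    linarith [mem_closedBall.1 hx, mem_closedBall.1 hy]

variable [MeasurableSpace X]

lemma setLIntegral_one_sub_ball_pow_le_inv (ν : Measure X) {A : Set X} (hA : MeasurableSet A)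
    {δ : ℝ} (hAδ : ∀ y ∈ A, A ⊆ ball y δ) (n : ℕ) :
    ∫⁻ y in A, (1 - ν (ball y δ)) ^ n ∂ν ≤ (n : ℝ≥0∞)⁻¹ :=
  calc ∫⁻ y in A, (1 - ν (ball y δ)) ^ n ∂ν
      ≤ ∫⁻ _ in A, (1 - ν A) ^ n ∂ν :=
        setLIntegral_mono' hA fun y hy => by gcongr; exact hAδ y hy
    _ = (1 - ν A) ^ n * ν A := setLIntegral_const A _
    _ ≤ (n : ℝ≥0∞)⁻¹ := one_sub_pow_mul_le_inv_natCast _ n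

variable [OpensMeasurableSpace X]

lemma lintegral_one_sub_ball_pow_le_encard_mul_inv {ν : Measure X} {S C : Set X}
    (hS : ∀ᵐ y ∂ν, y ∈ S) {ε : ℝ≥0} (hSC : IsCover ε S C) (hC : C.Countable) {δ : ℝ}
    (hεδ : 2 * ε < δ) (n : ℕ) :
    ∫⁻ y, (1 - ν (ball y δ)) ^ n ∂ν ≤ C.encard * (n : ℝ≥0∞)⁻¹ := by
  have : Countable C := hC
  have ball_cover : ∀ᵐ y ∂ν, y ∈ ⋃ c : C, closedBall (c : X) ε := by
    filter_upwards [hS] with y hy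
    simpa using isCover_iff_subset_iUnion_closedBall.1 hSC hy
  calc ∫⁻ y, (1 - ν (ball y δ)) ^ n ∂ν
      = ∫⁻ y in ⋃ c : C, closedBall (c : X) ε, (1 - ν (ball y δ)) ^ n ∂ν := by
        rw [Measure.restrict_eq_self_of_ae_mem ball_cover]
    _ ≤ ∑' c : C, ∫⁻ y in closedBall (c : X) ε, (1 - ν (ball y δ)) ^ n ∂ν :=
        lintegral_iUnion_le _ _
    _ ≤ ∑' _ : C, (n : ℝ≥0∞)⁻¹ := ENNReal.tsum_le_tsum fun _ =>
        setLIntegral_one_sub_ball_pow_le_inv ν measurableSet_closedBall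
          (fun _ => closedBall_subset_ball_of_mem hεδ) n
    _ = C.encard * (n : ℝ≥0∞)⁻¹ := ENNReal.tsum_set_const C _

lemma lintegral_one_sub_ball_pow_eq_zero {ν : Measure X} [IsProbabilityMeasure ν] {c : X}
    {R : ℝ} (hν : ∀ᵐ y ∂ν, y ∈ closedBall c R) {δ : ℝ} (hRδ : 2 * R < δ) {n : ℕ} (hn : n ≠ 0) :
    ∫⁻ y, (1 - ν (ball y δ)) ^ n ∂ν = 0 := by
  have integrand_zero : ∀ᵐ y ∂ν, (1 - ν (ball y δ)) ^ n = 0 := by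
    filter_upwards [hν] with y hy
    have ball_full : ∀ᵐ x ∂ν, x ∈ ball y δ := hν.mono (closedBall_subset_ball_of_mem hRδ hy)
    rw [(prob_compl_eq_zero_iff measurableSet_ball).1 ball_full, tsub_self, zero_pow hn]
  rw [lintegral_congr_ae integrand_zero, lintegral_zero]

lemma prod_pi_forall_le_dist_eq_lintegral [SecondCountableTopology X] {ι : Type*} [Fintype ι]
    (μ ν : Measure X) [IsProbabilityMeasure ν] (δ : ℝ) :
    μ.prod (Measure.pi fun _ : ι => ν) {p : X × (ι → X) | ∀ j, δ ≤ dist (p.2 j) p.1}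
      = ∫⁻ y, (1 - ν (ball y δ)) ^ Fintype.card ι ∂μ := by
  have measurableSet_far : MeasurableSet {p : X × (ι → X) | ∀ j, δ ≤ dist (p.2 j) p.1} := by
    rw [Set.ofPred_forall]
    exact .iInter fun j => measurableSet_le measurable_const (by fun_prop)
  have section_far (y : X) : Prod.mk y ⁻¹' {p : X × (ι → X) | ∀ j, δ ≤ dist (p.2 j) p.1}
      = Set.univ.pi fun _ => (ball y δ)ᶜ := by
    ext x; simp
  simp [Measure.prod_apply measurableSet_far, section_far, Measure.pi_pi,
    prob_compl_eq_one_sub measurableSet_ball]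

end PseudoMetricSpace

lemma ofReal_integral_one_sub_measure_pow_le_lintegral {α β : Type*} [MeasurableSpace α]
    [MeasurableSpace β] (μ : Measure α) (ν : Measure β) [IsProbabilityMeasure ν] (s : α → Set β)
    (n : ℕ) :
    ENNReal.ofReal (∫ y, (1 - (ν (s y)).toReal) ^ n ∂μ) ≤ ∫⁻ y, (1 - ν (s y)) ^ n ∂μ := by
  have enorm_integrand (y : α) : ‖(1 - (ν (s y)).toReal) ^ n‖ₑ = (1 - ν (s y)) ^ n := by
    rw [← ENNReal.toReal_one, ← ENNReal.toReal_sub_of_le prob_le_one ENNReal.one_ne_top,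
      enorm_pow, Real.enorm_of_nonneg ENNReal.toReal_nonneg, ENNReal.ofReal_toReal (by finiteness)]
  calc ENNReal.ofReal (∫ y, (1 - (ν (s y)).toReal) ^ n ∂μ)
      ≤ ‖∫ y, (1 - (ν (s y)).toReal) ^ n ∂μ‖ₑ := Real.ofReal_le_enorm _
    _ ≤ ∫⁻ y, ‖(1 - (ν (s y)).toReal) ^ n‖ₑ ∂μ := enorm_integral_le_lintegral_enorm _
    _ = ∫⁻ y, (1 - ν (s y)) ^ n ∂μ := lintegral_congr enorm_integrand

section NormedSpace

variable {E : Type*} [NormedAddCommGroup E]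

lemma encard_mul_addHaar_ball_le_of_isSeparated [MeasurableSpace E] [BorelSpace E]
    (μ : Measure E) [μ.IsAddHaarMeasure] {ε : ℝ≥0} {A C : Set E} (hCA : C ⊆ A)
    (hC : IsSeparated ε C) :
    C.encard * μ (ball 0 (ε / 2)) ≤ μ (thickening (ε / 2) A) := by
  have disjoint_balls : Pairwise (Function.onFun Disjoint fun c : C => ball (c : E) (ε / 2)) := by
    intro c d hcd
    have lt_edist : (ε : ℝ≥0∞) < edist (c : E) d := hC c.2 d.2 (Subtype.coe_ne_coe.2 hcd)
    have lt_dist : (ε : ℝ) < dist (c : E) d := by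
      rw [edist_nndist] at lt_edist
      exact_mod_cast lt_edist
    exact ball_disjoint_ball (by linarith)
  calc C.encard * μ (ball 0 (ε / 2))
      = ∑' c : C, μ (ball (c : E) (ε / 2)) := by
        simp_rw [Measure.addHaar_ball_center μ, ENNReal.tsum_set_const]
    _ ≤ μ (⋃ c : C, ball (c : E) (ε / 2)) :=
        tsum_meas_le_meas_iUnion_of_disjoint μ (fun _ => measurableSet_ball) disjoint_balls
    _ ≤ μ (thickening (ε / 2) A) :=
        measure_mono <| Set.iUnion_subset fun c => ball_subset_thickening (hCA c.2) _

variable [NormedSpace ℝ E] [FiniteDimensional ℝ E]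

lemma packingNumber_closedBall_le {ε : ℝ≥0} (hε : 0 < ε) {R : ℝ} (hR : 0 ≤ R) (c : E) :
    (packingNumber ε (closedBall c R) : ℝ≥0∞)
      ≤ ENNReal.ofReal ((1 + 2 * R / ε) ^ finrank ℝ E) := by
  borelize E
  let μ : Measure E := Measure.addHaar
  have hε2 : (0 : ℝ) < ε / 2 := by positivity
  simp only [packingNumber, ENat.toENNReal_iSup, iSup_le_iff]
  intro C hC hsep
  have volume_le : C.encard * μ (ball 0 (ε / 2))
      ≤ ENNReal.ofReal ((1 + 2 * R / ε) ^ finrank ℝ E) * μ (ball 0 (ε / 2)) :=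
    calc C.encard * μ (ball 0 (ε / 2))
        ≤ μ (thickening (ε / 2) (closedBall c R)) :=
          encard_mul_addHaar_ball_le_of_isSeparated μ hC hsep
      _ = μ (ball c ((1 + 2 * R / ε) * (ε / 2))) := by
          rw [thickening_closedBall hε2 hR]
          congr 2
          field_simp
      _ = ENNReal.ofReal ((1 + 2 * R / ε) ^ finrank ℝ E) * μ (ball 0 (ε / 2)) :=
          Measure.addHaar_ball_mul_of_pos μ c (by positivity) _
  exact (ENNReal.mul_le_mul_iff_left (measure_ball_pos μ 0 hε2).ne' measure_ball_lt_top.ne).1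
    volume_le

lemma exists_finite_isCover_closedBall_encard_le {ε : ℝ≥0} (hε : 0 < ε) {R : ℝ} (hR : 0 ≤ R)
    (c : E) :
    ∃ C : Set E, C.Finite ∧ IsCover ε (closedBall c R) C ∧
      (C.encard : ℝ≥0∞) ≤ ENNReal.ofReal ((1 + 2 * R / ε) ^ finrank ℝ E) := by
  have covering_le :=
    (ENat.toENNReal_le.2 (coveringNumber_le_packingNumber ε (closedBall c R))).trans
      (packingNumber_closedBall_le hε hR c)
  have covering_ne_top : coveringNumber ε (closedBall c R) ≠ ⊤ :=
    ENat.toENNReal_ne_top.1 (covering_le.trans_lt ENNReal.ofReal_lt_top).ne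
  exact ⟨minimalCover ε (closedBall c R), finite_minimalCover,
    isCover_minimalCover covering_ne_top, by rwa [encard_minimalCover covering_ne_top]⟩

variable [MeasurableSpace E] [BorelSpace E]

lemma lintegral_one_sub_ball_pow_le (ν : Measure E) [IsProbabilityMeasure ν] {c : E} {R : ℝ}
    (hν : ∀ᵐ y ∂ν, y ∈ closedBall c R) {δ : ℝ} (hδ : 0 < δ) {n : ℕ} (hn : 1 ≤ n) :
    ∫⁻ y, (1 - ν (ball y δ)) ^ n ∂ν
      ≤ ENNReal.ofReal ((8 * R) ^ finrank ℝ E / (n * δ ^ finrank ℝ E)) := by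
  have hn' : (0 : ℝ) < n := by exact_mod_cast hn
  rcases lt_or_ge (2 * R) δ with hRδ | hRδ
  · rw [lintegral_one_sub_ball_pow_eq_zero hν hRδ (Nat.one_le_iff_ne_zero.1 hn)]
    exact zero_le
  · have hR : 0 ≤ R := by linarith
    set d := finrank ℝ E
    lift δ to ℝ≥0 using hδ.le
    rw [NNReal.coe_pos] at hδ
    obtain ⟨C, hfin, hcover, hcard⟩ := exists_finite_isCover_closedBall_encard_le
      (ε := δ / 3) (by positivity) hR c
    have covering_bound : 1 + 2 * R / (δ / 3 : ℝ≥0) ≤ 8 * R / δ := by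
      push_cast
      field_simp
      linarith
    calc ∫⁻ y, (1 - ν (ball y δ)) ^ n ∂ν
        ≤ C.encard * (n : ℝ≥0∞)⁻¹ :=
          lintegral_one_sub_ball_pow_le_encard_mul_inv hν hcover hfin.countable
            (by push_cast; linarith) n
      _ ≤ ENNReal.ofReal ((8 * R / δ) ^ d) * (n : ℝ≥0∞)⁻¹ := by
          gcongr
          exact hcard.trans (by gcongr)
      _ = ENNReal.ofReal ((8 * R) ^ d / (n * δ ^ d)) := by
          rw [← ENNReal.ofReal_natCast, ← ENNReal.ofReal_inv_of_pos hn',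
            ← ENNReal.ofReal_mul (by positivity), div_pow, ← div_eq_mul_inv, div_div,
            mul_comm (n : ℝ)]

theorem integral_one_sub_ball_pow_le_general (ν : Measure E) [IsProbabilityMeasure ν] {c : E}
    {R : ℝ} (hν : ν (closedBall c R)ᶜ = 0) {δ : ℝ} (hδ : 0 < δ) {n : ℕ} (hn : 1 ≤ n) :
    (∫ y, (1 - (ν (ball y δ)).toReal) ^ n ∂ν
        ≤ (8 * R) ^ finrank ℝ E / (n * δ ^ finrank ℝ E)) ∧
      ν.prod (Measure.pi fun _ : Fin n => ν) {p : E × (Fin n → E) | ∀ j, δ ≤ dist (p.2 j) p.1}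
        ≤ ENNReal.ofReal ((8 * R) ^ finrank ℝ E / (n * δ ^ finrank ℝ E)) := by
  have hS : ∀ᵐ y ∂ν, y ∈ closedBall c R := hν
  have hR : 0 ≤ R := nonempty_closedBall.1 hS.exists
  have lintegral_le := lintegral_one_sub_ball_pow_le ν hS hδ hn
  refine ⟨(ENNReal.ofReal_le_ofReal_iff (by positivity)).1 <|
    (ofReal_integral_one_sub_measure_pow_le_lintegral ν ν _ n).trans lintegral_le, ?_⟩
  simpa [prod_pi_forall_le_dist_eq_lintegral] using lintegral_le

end NormedSpace

/-- For every `M ≥ 1` and `R > 0` there is `C₀ = C₀(M,R) > 0` such that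
for every Borel probability measure `ν` on `ℝ^M` supported in the closed ball of radius
`R` centered at the origin, every `δ ∈ (0,1]` and every `n ≥ 1`,
`∫ (1 − ν(B(y,δ)))^n ν(dy) ≤ C₀/(n·δ^M)`.  In particular, if `Z, Z_1,…,Z_n` are i.i.d.
with law `ν`, the probability that every `Z_j` lies at distance at least `δ` from `Z` is
at most `C₀/(n·δ^M)`. -/
theorem integral_one_sub_ball_pow_le
    (M : ℕ) (hM : 1 ≤ M) (R : ℝ) (hR : 0 < R) :
    ∃ C₀ : ℝ, 0 < C₀ ∧
      ∀ ν : Measure (EuclideanSpace ℝ (Fin M)), IsProbabilityMeasure ν →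
        ν (Metric.closedBall 0 R)ᶜ = 0 →
        ∀ δ : ℝ, 0 < δ → δ ≤ 1 → ∀ n : ℕ, 1 ≤ n →
          (∫ y, (1 - (ν (Metric.ball y δ)).toReal) ^ n ∂ν ≤ C₀ / (n * δ ^ M)) ∧
          ν.prod (Measure.pi fun _ : Fin n => ν)
              {p : EuclideanSpace ℝ (Fin M) × (Fin n → EuclideanSpace ℝ (Fin M)) |
                ∀ j, δ ≤ dist (p.2 j) p.1}
            ≤ ENNReal.ofReal (C₀ / (n * δ ^ M)) := by
  refine ⟨(8 * R) ^ M, by positivity, fun ν _ hν δ hδ _ n hn => ?_⟩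
  simpa using integral_one_sub_ball_pow_le_general ν hν hδ hn
end
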